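/- Torsion criterion at a 1-cut: if v is a vertex of Γ and e₁, e₂ are edges lying in distinct connected components of the vertex explosion Γ_v, then the (e₁ − e₂)-torsion submodule of H₁(B(Γ)) is contained in the image of H₁(B(Γ_v)) → H₁(B(Γ)). -/

import Mathlib

/-!
A combinatorial model of the Świątkowski chain complex of a finite graph
(finite CW-complex of dimension ≤ 1), computing the homology of its unordered
configuration spaces (An–Drummond-Cole–Knudsen).

A graph is given by a vertex type `V`, an edge type `E` and an endpoint map
`ends : E → V × V` (self-loops and multiple edges are allowed).  A half-edge is
a pair `(e, b) : E × Bool`, whose vertex is the corresponding endpoint of `e`.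

We work with the ℤ-basis of the Świątkowski complex consisting of a monomial
`m : E →₀ ℕ` in the edges together with a choice, for each vertex `v`, of a
local generator from `S(v) = ℤ⟨∅, v, h ∈ H(v)⟩`: a half-edge at `v`
(`Sum.inl`), the vertex itself (`Sum.inr true`), or `∅` (`Sum.inr false`).
The differential is the ℤ[E]-linear derivation with `∂h = e(h) - v(h)`,
with Koszul signs determined by a fixed enumeration of the vertices.
`degB` is the homological degree (number of half-edge factors) and `wtB` is the
weight (number of particles).  `hasDW i k` is the subgroup of chains of pure
degree `i` and weight `k`; `cyc i k` the corresponding cycles, `bdry i k` the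
boundaries of degree/weight `(i+1, k)` chains, and `Hgr i k` their quotient,
which is `H_i(B_k Γ)`.  `stab e` is edge stabilization (multiplication by `e`).
-/

namespace Swiatkowski

variable {V E : Type} [Fintype V] [Fintype E] [DecidableEq V] [DecidableEq E]

/-- The vertex of a half-edge. -/
def vtx (ends : E → V × V) (h : E × Bool) : V :=
  cond h.2 (ends h.1).2 (ends h.1).1

/-- The local generators at a vertex `v`: a half-edge at `v`, or the vertex
generator (`true`), or `∅` (`false`). -/
abbrev VGen (ends : E → V × V) (v : V) : Type :=
  {h : E × Bool // vtx ends h = v} ⊕ Bool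

/-- A choice of local generator at every vertex. -/
abbrev States (ends : E → V × V) : Type := ∀ v : V, VGen ends v

/-- The ℤ-basis of the Świątkowski complex: an edge monomial together with a
state. -/
abbrev Bas (ends : E → V × V) : Type := (E →₀ ℕ) × States ends

/-- The underlying ℤ-module of the Świątkowski complex. -/
abbrev SC (ends : E → V × V) : Type := Bas ends →₀ ℤ

variable (ends : E → V × V)

/-- An enumeration of the vertices, used for Koszul signs. -/
noncomputable def idx : V → ℕ := fun v => ((Fintype.equivFin V) v : ℕ)

/-- The Koszul sign of the half-edge slot at `v` inside the state `f`. -/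
noncomputable def sgn (f : States ends) (v : V) : ℤ :=
  (-1) ^ (Finset.univ.filter fun w => idx w < idx v ∧ (f w).isLeft = true).card

/-- Homological degree of a basis element: its number of half-edge factors. -/
def degB (b : Bas ends) : ℕ :=
  (Finset.univ.filter fun v => (b.2 v).isLeft = true).card

/-- Weight (particle number) of a basis element. -/
def wtB (b : Bas ends) : ℕ :=
  (b.1.sum fun _ n => n) + ∑ v : V, Sum.elim (fun _ => 1) (fun t => cond t 1 0) (b.2 v)

/-- Value of the differential on a basis element: the signed sum over the
half-edge slots `h` of the substitutions `h ↦ e(h)` and `h ↦ v(h)`. -/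
noncomputable def Db (b : Bas ends) : SC ends :=
  ∑ v : V,
    (match b.2 v with
      | Sum.inl h =>
          sgn ends b.2 v •
            (Finsupp.single (b.1 + Finsupp.single h.1.1 1,
                Function.update b.2 v (Sum.inr false)) (1 : ℤ)
              - Finsupp.single (b.1, Function.update b.2 v (Sum.inr true)) (1 : ℤ))
      | Sum.inr _ => 0)

/-- The differential of the Świątkowski complex. -/
noncomputable def D : SC ends →ₗ[ℤ] SC ends :=
  Finsupp.linearCombination ℤ (Db ends)

/-- The subgroup of chains of pure homological degree `i` and weight `k`. -/
noncomputable def hasDW (i k : ℕ) : Submodule ℤ (SC ends) where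
  carrier := {x | ∀ b ∈ x.support, degB ends b = i ∧ wtB ends b = k}
  add_mem' := by
    intro x y hx hy b hb
    rcases Finset.mem_union.mp (Finsupp.support_add hb) with h | h
    exacts [hx b h, hy b h]
  zero_mem' := by simp
  smul_mem' := by
    intro c x hx b hb
    exact hx b (Finsupp.support_smul hb)

/-- Cycles of degree `i` and weight `k`. -/
noncomputable def cyc (i k : ℕ) : Submodule ℤ (SC ends) := LinearMap.ker (D ends) ⊓ hasDW ends i k

/-- Boundaries of degree `i` and weight `k` chains. -/
noncomputable def bdry (i k : ℕ) : Submodule ℤ (SC ends) := Submodule.map (D ends) (hasDW ends (i + 1) k)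

/-- The homology `H_i(B_k Γ)` of the weight-`k` Świątkowski complex. -/
noncomputable def Hgr (i k : ℕ) :=
  cyc ends i k ⧸ Submodule.comap (cyc ends i k).subtype (bdry ends i k)

noncomputable instance (i k : ℕ) : AddCommGroup (Hgr ends i k) :=
  inferInstanceAs (AddCommGroup
    (cyc ends i k ⧸ Submodule.comap (cyc ends i k).subtype (bdry ends i k)))

/-- Edge stabilization: multiplication by the edge `e`. -/
noncomputable def stab (e : E) : SC ends →ₗ[ℤ] SC ends :=
  Finsupp.lmapDomain ℤ ℤ fun b => (b.1 + Finsupp.single e 1, b.2)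

end Swiatkowski

namespace Swiatkowski

section Explosion

variable {V E : Type} [Fintype V] [Fintype E] [DecidableEq V] [DecidableEq E]
variable (ends : E → V × V) (v : V)

/-- The vertices of the vertex explosion `Γ_v`: the old vertices other than
`v`, together with one new (univalent) vertex for each half-edge at `v`. -/
abbrev ExVert : Type := {w : V // w ≠ v} ⊕ {h : E × Bool // vtx ends h = v}

/-- The endpoint of an edge of `Γ_v` on the side `b`: the old endpoint if it
was not `v`, and the new leaf corresponding to the half-edge otherwise. -/
def exSide (e : E) (b : Bool) : ExVert ends v :=
  if p : vtx ends (e, b) = v then Sum.inr ⟨(e, b), p⟩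
  else Sum.inl ⟨vtx ends (e, b), p⟩

/-- The endpoint map of the vertex explosion `Γ_v`. -/
def exEnds : E → ExVert ends v × ExVert ends v :=
  fun e => (exSide ends v e false, exSide ends v e true)

/-- Whether some new leaf of `Γ_v` carries a half-edge generator. -/
def leafHasHalf (f : States (exEnds ends v)) : Prop :=
  ∃ h : {h : E × Bool // vtx ends h = v}, (f (Sum.inr h)).isLeft = true

instance (f : States (exEnds ends v)) : Decidable (leafHasHalf ends v f) := by
  unfold leafHasHalf; infer_instance

/-- The edge monomial accounting for particles sitting on new leaves of
`Γ_v`: under the inclusion `Γ_v ⊆ Γ` such a particle becomes a particle on the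
corresponding edge. -/
noncomputable def extraMon (f : States (exEnds ends v)) : E →₀ ℕ :=
  ∑ h : {h : E × Bool // vtx ends h = v},
    (match f (Sum.inr h) with
      | Sum.inr true => Finsupp.single h.1.1 1
      | _ => 0)

/-- Restriction of a state of `Γ_v` to a state of `Γ` (the slot of `v` is set
to `∅`). -/
def resState (f : States (exEnds ends v)) : States ends := fun w =>
  if q : w = v then Sum.inr false
  else
    match f (Sum.inl ⟨w, q⟩) with
    | Sum.inl h =>
        if p : vtx ends h.1 = w then Sum.inl ⟨h.1, p⟩ else Sum.inr false
    | Sum.inr t => Sum.inr t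

/-- The chain map underlying the map induced on configuration spaces by the
inclusion `Γ_v ⊆ Γ` (as a subgraph of a subdivision), on basis elements. -/
noncomputable def inclB (b : Bas (exEnds ends v)) : SC ends :=
  if leafHasHalf ends v b.2 then 0
  else Finsupp.single (b.1 + extraMon ends v b.2, resState ends v b.2) (1 : ℤ)

/-- The chain map induced by the inclusion `Γ_v ⊆ Γ`. -/
noncomputable def incl : SC (exEnds ends v) →ₗ[ℤ] SC ends :=
  Finsupp.linearCombination ℤ (inclB ends v)

variable (h₀ : E × Bool)

/-- The index type of the direct sum `⊕_{h₀ ≠ h ∈ H(v)}`: the half-edges at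
`v` other than the privileged one `h₀`. -/
abbrev OtherHalf : Type := {h : E × Bool // vtx ends h = v ∧ h ≠ h₀}

/-- Transfer of a state of `Γ` (forgetting the generator at `v`) to a state of
`Γ_v`, with `∅` on all the new leaves. -/
def downState (f : States ends) : States (exEnds ends v) := fun w' =>
  match w' with
  | Sum.inl w =>
      (match f w.1 with
        | Sum.inl h =>
            if p : vtx (exEnds ends v) h.1 = Sum.inl w then Sum.inl ⟨h.1, p⟩
            else Sum.inr false
        | Sum.inr t => Sum.inr t)
  | Sum.inr _ => Sum.inr false

/-- The chain map underlying `ψ`, on basis elements: in the reduced basis of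
the Świątkowski complex at `v` privileging `h₀`, it records the coefficient of
`h − h₀` for each half-edge `h ≠ h₀` at `v`. -/
noncomputable def psiB (b : Bas ends) : OtherHalf ends v h₀ → SC (exEnds ends v) :=
  fun h =>
    if b.2 v = Sum.inl ⟨h.1, h.2.1⟩ then
      sgn ends b.2 v • Finsupp.single (b.1, downState ends v b.2) (1 : ℤ)
    else 0

/-- The chain map inducing the map
`ψ : H_i(B_k(Γ)) → ⊕_{h₀ ≠ h ∈ H(v)} H_{i−1}(B_{k−1}(Γ_v))`,
sending `b + Σ_h (h − h₀)·a_h` to `(a_h)_h`. -/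
noncomputable def psi :
    SC ends →ₗ[ℤ] (OtherHalf ends v h₀ → SC (exEnds ends v)) :=
  Finsupp.linearCombination ℤ (psiB ends v h₀)

/-- The connecting-type map `δ`, acting on the summand indexed by `h` as
multiplication by the ring element `e(h) − e(h₀)`. -/
noncomputable def delta :
    (OtherHalf ends v h₀ → SC (exEnds ends v)) →ₗ[ℤ] SC (exEnds ends v) :=
  ∑ h : OtherHalf ends v h₀,
    (stab (exEnds ends v) h.1.1 - stab (exEnds ends v) h₀.1) ∘ₗ LinearMap.proj h

end Explosion

end Swiatkowski

set_option linter.unusedSectionVars false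
set_option linter.unusedSimpArgs false
namespace Swiatkowski
section Proof

variable {V E : Type} [Fintype V] [Fintype E] [DecidableEq V] [DecidableEq E]
variable (ends : E → V × V)

/-- Basis extensionality. -/
lemma ext_bas {M : Type*} [AddCommGroup M] {F G : SC ends →ₗ[ℤ] M}
    (h : ∀ m f, F (Finsupp.single (m, f) 1) = G (Finsupp.single (m, f) 1)) : F = G := by
  apply Finsupp.lhom_ext'
  rintro ⟨m, f⟩
  ext
  simpa using h m f

/-- Local substitution operators. -/
noncomputable def Subst (w : V) (p q : VGen ends w) (s : States ends → ℤ) :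
    Module.End ℤ (SC ends) :=
  Finsupp.linearCombination ℤ fun b =>
    if b.2 w = p then s b.2 • Finsupp.single (b.1, Function.update b.2 w q) (1 : ℤ) else 0

lemma Subst_single (w : V) (p q : VGen ends w) (s : States ends → ℤ) (m : E →₀ ℕ)
    (f : States ends) :
    Subst ends w p q s (Finsupp.single (m, f) 1) =
      if f w = p then s f • Finsupp.single (m, Function.update f w q) (1 : ℤ) else 0 := by
  simp [Subst]

lemma stab_single (e : E) (m : E →₀ ℕ) (f : States ends) :
    stab ends e (Finsupp.single (m, f) 1) = Finsupp.single (m + Finsupp.single e 1, f) 1 := by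
  simp [stab]

/-- stab as an endomorphism. -/
noncomputable def st (e : E) : Module.End ℤ (SC ends) := stab ends e

lemma st_single (e : E) (m : E →₀ ℕ) (f : States ends) :
    st ends e (Finsupp.single (m, f) 1) = Finsupp.single (m + Finsupp.single e 1, f) 1 :=
  stab_single ends e m f

lemma st_comm (e e' : E) : Commute (st ends e) (st ends e') := by
  apply ext_bas
  intro m f
  simp only [Module.End.mul_apply, st_single]
  rw [add_right_comm]

lemma st_Subst (e : E) (w : V) (p q : VGen ends w) (s : States ends → ℤ) :
    Commute (st ends e) (Subst ends w p q s) := by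
  apply ext_bas
  intro m f
  simp only [Module.End.mul_apply, st_single, Subst_single]
  split_ifs <;> simp [st_single, -Finsupp.smul_single]

lemma Subst_comm (ε : ℤ) (w w' : V) (hw : w ≠ w') (p q : VGen ends w) (p' q' : VGen ends w')
    (s s' : States ends → ℤ)
    (H : ∀ f, f w = p → f w' = p' →
      s f * s' (Function.update f w q) = ε * (s' f * s (Function.update f w' q'))) :
    Subst ends w' p' q' s' * Subst ends w p q s =
      ε • (Subst ends w p q s * Subst ends w' p' q' s') := by
  apply ext_bas
  intro m f
  simp only [Module.End.mul_apply, LinearMap.smul_apply, Subst_single]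
  by_cases h : f w = p <;> by_cases h' : f w' = p'
  · simp only [h, h', if_true, map_smul, Subst_single, Function.update_of_ne hw,
      Function.update_of_ne hw.symm, smul_smul, H f h h', mul_assoc]
    rw [Function.update_comm hw]
  · simp [h, h', -Finsupp.smul_single, Subst_single, Function.update_of_ne hw.symm]
  · simp [h, h', -Finsupp.smul_single, Subst_single, Function.update_of_ne hw]
  · simp [h, h']

lemma Subst_mul_self (w : V) (p q p' q' : VGen ends w) (s s' : States ends → ℤ)
    (H : q' ≠ p) : Subst ends w p q s * Subst ends w p' q' s' = 0 := by
  apply ext_bas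
  intro m f
  simp only [Module.End.mul_apply, Subst_single]
  split_ifs <;> simp [Subst_single, H, -Finsupp.smul_single]

/-! signs -/

lemma idx_inj {w w' : V} (h : idx w = idx w') : w = w' := by
  unfold idx at h
  exact (Fintype.equivFin V).injective (Fin.ext h)

lemma sgn_update_same (f : States ends) (w : V) (q : VGen ends w) (w' : V)
    (h : q.isLeft = (f w).isLeft) : sgn ends (Function.update f w q) w' = sgn ends f w' := by
  unfold sgn
  congr 2
  apply Finset.filter_congr
  intro u _
  by_cases hu : u = w
  · subst hu; simp [h]
  · simp [Function.update_of_ne hu]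

lemma sgn_update_ge (f : States ends) (w : V) (q : VGen ends w) (w' : V)
    (h : ¬ idx w < idx w') : sgn ends (Function.update f w q) w' = sgn ends f w' := by
  unfold sgn
  congr 2
  apply Finset.filter_congr
  intro u _
  by_cases hu : u = w
  · subst hu; simp [h]
  · simp [Function.update_of_ne hu]

lemma sgn_update_lt_aux (f : States ends) (w : V) (q : VGen ends w) (w' : V)
    (h : idx w < idx w') (h1 : q.isLeft = true) (h2 : (f w).isLeft = false) :
    sgn ends (Function.update f w q) w' = - sgn ends f w' := by
  unfold sgn
  have : (Finset.univ.filter fun u => idx u < idx w' ∧ (Function.update f w q u).isLeft = true)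
      = insert w (Finset.univ.filter fun u => idx u < idx w' ∧ (f u).isLeft = true) := by
    ext u
    by_cases hu : u = w
    · subst hu; simp [h, h1]
    · simp [Function.update_of_ne hu, hu]
  rw [this, Finset.card_insert_of_notMem (by simp [h2]), pow_succ]
  ring

lemma sgn_update_lt (f : States ends) (w : V) (q : VGen ends w) (w' : V)
    (h : idx w < idx w') (h1 : q.isLeft ≠ (f w).isLeft) :
    sgn ends (Function.update f w q) w' = - sgn ends f w' := by
  by_cases hq : q.isLeft = true
  · apply sgn_update_lt_aux ends f w q w' h hq
    simpa [hq] using h1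
  · have := sgn_update_lt_aux ends (Function.update f w q) w (f w) w' h (by simpa [hq] using h1)
      (by simpa using hq)
    rw [Function.update_idem, Function.update_eq_self] at this
    rw [this, neg_neg]

/-- Odd substitution. -/
noncomputable abbrev Odd' (w : V) (p q : VGen ends w) : Module.End ℤ (SC ends) :=
  Subst ends w p q (fun f => sgn ends f w)

lemma odd_odd (w w' : V) (hw : w ≠ w') (p q : VGen ends w) (p' q' : VGen ends w')
    (hp : q.isLeft ≠ p.isLeft) (hp' : q'.isLeft ≠ p'.isLeft) :
    Odd' ends w' p' q' * Odd' ends w p q = - (Odd' ends w p q * Odd' ends w' p' q') := by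
  rw [← neg_one_smul ℤ]
  apply Subst_comm _ _ _ _ hw
  rintro f rfl rfl
  have hne : idx w ≠ idx w' := fun h => hw (idx_inj h)
  rcases lt_or_gt_of_ne hne with h | h
  · rw [sgn_update_lt ends f w q w' h hp, sgn_update_ge ends f w' q' w (by omega)]; ring
  · rw [sgn_update_lt ends f w' q' w h hp', sgn_update_ge ends f w q w' (by omega)]; ring

lemma odd_even (w w' : V) (hw : w ≠ w') (p q : VGen ends w) (p' q' : VGen ends w')
    (hp' : q'.isLeft = p'.isLeft) :
    Commute (Subst ends w' p' q' (fun _ => 1)) (Odd' ends w p q) := by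
  have := Subst_comm ends 1 w w' hw p q p' q' (fun f => sgn ends f w) (fun _ => 1) (by
    rintro f rfl rfl
    simp [sgn_update_same ends f w' q' w hp'])
  rw [one_smul] at this
  exact this

/-- The part of the differential at the vertex `w`. -/
noncomputable def Dv (w : V) : Module.End ℤ (SC ends) :=
  ∑ h : {h : E × Bool // vtx ends h = w},
    (st ends h.1.1 * Odd' ends w (Sum.inl h) (Sum.inr false)
      - Odd' ends w (Sum.inl h) (Sum.inr true))

lemma Dv_single_left (w : V) (m : E →₀ ℕ) (f : States ends) (h) (hf : f w = Sum.inl h) :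
    Dv ends w (Finsupp.single (m, f) 1) = sgn ends f w •
            (Finsupp.single (m + Finsupp.single h.1.1 1,
                Function.update f w (Sum.inr false)) (1 : ℤ)
              - Finsupp.single (m, Function.update f w (Sum.inr true)) (1 : ℤ)) := by
  unfold Dv
  rw [LinearMap.sum_apply, Finset.sum_eq_single h]
  · simp [Subst_single, hf, st_single, smul_sub, -Finsupp.smul_single]
  · intro h' _ hne
    simp [Subst_single, hf, hne.symm]
  · simp

lemma Dv_single_right (w : V) (m : E →₀ ℕ) (f : States ends) (t) (hf : f w = Sum.inr t) :
    Dv ends w (Finsupp.single (m, f) 1) = 0 := by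
  unfold Dv
  rw [LinearMap.sum_apply, Finset.sum_eq_zero]
  intro h' _
  simp [Subst_single, hf]

lemma D_eq : D ends = ∑ w, Dv ends w := by
  apply ext_bas
  intro m f
  rw [LinearMap.sum_apply]
  simp only [D, Finsupp.linearCombination_single, one_smul, Db]
  apply Finset.sum_congr rfl
  intro w _
  split
  · next h hf => rw [Dv_single_left ends w m f h hf]
  · next t hf => rw [Dv_single_right ends w m f t hf]

lemma st_Dv (e : E) (w : V) : Commute (st ends e) (Dv ends w) := by
  unfold Dv
  refine Commute.sum_right _ _ _ fun h _ => ?_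
  exact ((st_comm ends _ _).mul_right (st_Subst ends _ _ _ _ _)).sub_right
    (st_Subst ends _ _ _ _ _)

/-- Anything anticommuting with odd operators at `w` anticommutes with `Dv w`. -/
lemma anti_Dv (w : V) (X : Module.End ℤ (SC ends))
    (hst : ∀ e, Commute (st ends e) X)
    (h : ∀ h t, X * Odd' ends w (Sum.inl h) (Sum.inr t)
      = - (Odd' ends w (Sum.inl h) (Sum.inr t) * X)) :
    X * Dv ends w = - (Dv ends w * X) := by
  unfold Dv
  rw [Finset.mul_sum, Finset.sum_mul, ← Finset.sum_neg_distrib]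
  refine Finset.sum_congr rfl fun a _ => ?_
  rw [mul_sub, sub_mul, h, ← mul_assoc, ← (hst _).eq, mul_assoc, h, mul_neg, mul_assoc]
  abel

lemma odd_Dv (w w' : V) (hw : w ≠ w') (p q : VGen ends w) (hp : q.isLeft ≠ p.isLeft) :
    Odd' ends w p q * Dv ends w' = - (Dv ends w' * Odd' ends w p q) := by
  apply anti_Dv
  · intro e; exact st_Subst ends _ _ _ _ _
  · intro h t
    exact odd_odd ends w' w hw.symm _ _ _ _ (by simp) hp

lemma Dv_Dv (w w' : V) (hw : w ≠ w') :
    Dv ends w * Dv ends w' = - (Dv ends w' * Dv ends w) := by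
  apply anti_Dv
  · intro e; exact st_Dv ends _ _
  · intro h t
    rw [odd_Dv ends w' w hw.symm _ _ (by simp), neg_neg]

lemma odd_Dv_self (w : V) (p q : VGen ends w) (hp : p.isLeft = true) :
    Odd' ends w p q * Dv ends w = 0 := by
  unfold Dv
  rw [Finset.mul_sum]
  refine Finset.sum_eq_zero fun h _ => ?_
  rw [mul_sub, ← mul_assoc, ← (st_Subst ends _ _ _ _ _).eq, mul_assoc,
    Subst_mul_self, Subst_mul_self]
  · simp
  · rintro rfl; simp at hp
  · rintro rfl; simp at hp

lemma Dv_self (w : V) : Dv ends w * Dv ends w = 0 := by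
  conv_lhs => enter [1]; unfold Dv
  rw [Finset.sum_mul]
  refine Finset.sum_eq_zero fun h _ => ?_
  rw [sub_mul, mul_assoc, odd_Dv_self, odd_Dv_self] <;> simp

lemma D_D (x : SC ends) : D ends (D ends x) = 0 := by
  have : (∑ w, Dv ends w) * (∑ w, Dv ends w) = 0 := by
    rw [Finset.sum_mul_sum, ← Finset.sum_product']
    refine Finset.sum_involution (fun a _ => (a.2, a.1)) ?_ ?_ ?_ ?_
    · rintro ⟨a, b⟩ _
      by_cases h : a = b
      · subst h; simp [Dv_self]
      · simp [Dv_Dv ends a b h]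
    · rintro ⟨a, b⟩ _ h heq
      simp only [Prod.mk.injEq] at heq
      rw [heq.1] at h
      exact h (Dv_self ends _)
    · simp
    · simp
  rw [D_eq]
  exact LinearMap.congr_fun this x

end Proof
end Swiatkowski
set_option linter.unusedSectionVars false
set_option linter.unusedSimpArgs false
namespace Swiatkowski
section Proof2

variable {V E : Type} [Fintype V] [Fintype E] [DecidableEq V] [DecidableEq E]
variable (ends : E → V × V)

/-! gradings -/

lemma supp_map {M : Type*} [AddCommGroup M] (P : Bas ends → Prop) (x : SC ends)
    (hx : ∀ b ∈ x.support, P b) (F : SC ends →ₗ[ℤ] M) (N : Submodule ℤ M)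
    (h : ∀ m f, P (m, f) → F (Finsupp.single (m, f) 1) ∈ N) : F x ∈ N := by
  have hx' : x = ∑ b ∈ x.support, x b • Finsupp.single b (1 : ℤ) := by
    conv_lhs => rw [← Finsupp.sum_single x]
    unfold Finsupp.sum
    simp
  rw [hx', map_sum]
  refine Submodule.sum_mem _ fun b hb => ?_
  rw [map_smul]
  exact Submodule.smul_mem _ _ (h b.1 b.2 (hx b hb))

lemma supp_eq {M : Type*} [AddCommGroup M] (P : Bas ends → Prop) (x : SC ends)
    (hx : ∀ b ∈ x.support, P b) (F G : SC ends →ₗ[ℤ] M)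
    (h : ∀ m f, P (m, f) → F (Finsupp.single (m, f) 1) = G (Finsupp.single (m, f) 1)) :
    F x = G x := by
  have := supp_map ends P x hx (F - G) ⊥ (by
    intro m f hP
    simp [h m f hP])
  simpa [sub_eq_zero] using this

lemma single_mem_hasDW {i k : ℕ} {b : Bas ends} (h1 : degB ends b = i) (h2 : wtB ends b = k)
    (c : ℤ) : Finsupp.single b c ∈ hasDW ends i k := by
  intro b' hb'
  have := Finsupp.support_single_subset hb'
  rw [Finset.mem_singleton] at this
  subst this
  exact ⟨h1, h2⟩

lemma sum_update (g : ∀ w, VGen ends w → ℕ) (f : States ends) (w : V) (q : VGen ends w) :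
    (∑ u, g u (Function.update f w q u)) + g w (f w) = (∑ u, g u (f u)) + g w q := by
  rw [← Finset.add_sum_erase _ _ (Finset.mem_univ w),
    ← Finset.add_sum_erase _ (fun u => g u (f u)) (Finset.mem_univ w)]
  have : ∑ x ∈ Finset.univ.erase w, g x (Function.update f w q x)
      = ∑ x ∈ Finset.univ.erase w, g x (f x) := by
    refine Finset.sum_congr rfl fun u hu => ?_
    rw [Function.update_of_ne (Finset.ne_of_mem_erase hu)]
  rw [this]
  simp
  ring

lemma degB_update (m m' : E →₀ ℕ) (f : States ends) (w : V) (q : VGen ends w) :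
    degB ends (m', Function.update f w q) + (if (f w).isLeft = true then 1 else 0)
      = degB ends (m, f) + (if q.isLeft = true then 1 else 0) := by
  unfold degB
  rw [Finset.card_filter, Finset.card_filter]
  exact sum_update ends (fun w a => if a.isLeft = true then 1 else 0) f w q

/-- local weight -/
def wl {w : V} (a : VGen ends w) : ℕ := Sum.elim (fun _ => 1) (fun t => cond t 1 0) a

lemma wtB_update (m : E →₀ ℕ) (f : States ends) (w : V) (q : VGen ends w) :
    wtB ends (m, Function.update f w q) + wl ends (f w)
      = wtB ends (m, f) + wl ends q := by
  unfold wtB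
  have := sum_update ends (fun w a => wl ends a) f w q
  unfold wl at *
  simp only [add_assoc]
  rw [this]

lemma wtB_add (m : E →₀ ℕ) (e : E) (f : States ends) :
    wtB ends (m + Finsupp.single e 1, f) = wtB ends (m, f) + 1 := by
  unfold wtB
  rw [Finsupp.sum_add_index' (by simp) (by simp), Finsupp.sum_single_index rfl]
  simp only
  ring

lemma Dv_mem (w : V) (m : E →₀ ℕ) (f : States ends) (i k : ℕ) (h1 : degB ends (m, f) = i + 1)
    (h2 : wtB ends (m, f) = k) : Dv ends w (Finsupp.single (m, f) 1) ∈ hasDW ends i k := by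
  rcases hf : f w with h | t
  · rw [Dv_single_left ends w m f h hf]
    have a1 := degB_update ends m (m + Finsupp.single h.1.1 1) f w (Sum.inr false)
    have a2 := degB_update ends m m f w (Sum.inr true)
    have a3 := wtB_update ends m f w (Sum.inr false)
    have a4 := wtB_update ends m f w (Sum.inr true)
    have a5 := wtB_add ends m h.1.1 (Function.update f w (Sum.inr false))
    simp [hf, wl] at a1 a2 a3 a4
    refine Submodule.smul_mem _ _ (Submodule.sub_mem _ ?_ ?_) <;>
      apply single_mem_hasDW <;> omega
  · rw [Dv_single_right ends w m f t hf]; exact Submodule.zero_mem _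

lemma Dv_zero (w : V) (m : E →₀ ℕ) (f : States ends) (h1 : degB ends (m, f) = 0) :
    Dv ends w (Finsupp.single (m, f) 1) = 0 := by
  rcases hf : f w with h | t
  · have a1 := degB_update ends m m f w (Sum.inr false)
    simp [hf] at a1
    omega
  · rw [Dv_single_right ends w m f t hf]

/-- The differential away from `v`. -/
noncomputable def D' (v : V) : Module.End ℤ (SC ends) := ∑ w ∈ Finset.univ.erase v, Dv ends w

lemma D_eq' (v : V) : D ends = Dv ends v + D' ends v := by
  rw [D_eq, D', Finset.add_sum_erase _ _ (Finset.mem_univ v)]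

lemma st_D' (v : V) (e : E) : Commute (st ends e) (D' ends v) :=
  Commute.sum_right _ _ _ fun _ _ => st_Dv ends _ _

lemma D'_mem (v : V) (m : E →₀ ℕ) (f : States ends) (i k : ℕ) (h1 : degB ends (m, f) = i + 1)
    (h2 : wtB ends (m, f) = k) : D' ends v (Finsupp.single (m, f) 1) ∈ hasDW ends i k := by
  unfold D'
  rw [LinearMap.sum_apply]
  exact Submodule.sum_mem _ fun w _ => Dv_mem ends w m f i k h1 h2

lemma D'_zero (v : V) (m : E →₀ ℕ) (f : States ends) (h1 : degB ends (m, f) = 0) :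
    D' ends v (Finsupp.single (m, f) 1) = 0 := by
  unfold D'
  rw [LinearMap.sum_apply]
  exact Finset.sum_eq_zero fun w _ => Dv_zero ends w m f h1

lemma D_mem (i k : ℕ) (x : SC ends) (hx : x ∈ hasDW ends (i + 1) k) :
    D ends x ∈ hasDW ends i k := by
  refine supp_map ends _ x hx _ _ ?_
  intro m f h
  rw [D_eq, LinearMap.sum_apply]
  exact Submodule.sum_mem _ fun w _ => Dv_mem ends w m f i k h.1 h.2

/-- Projection to pure degree and weight. -/
noncomputable def pr (i k : ℕ) : Module.End ℤ (SC ends) :=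
  Finsupp.linearCombination ℤ fun b =>
    if degB ends b = i ∧ wtB ends b = k then Finsupp.single b 1 else 0

lemma pr_single (i k : ℕ) (m : E →₀ ℕ) (f : States ends) :
    pr ends i k (Finsupp.single (m, f) 1) =
    if degB ends (m, f) = i ∧ wtB ends (m, f) = k then Finsupp.single (m, f) 1 else 0 := by
  simp [pr]

lemma pr_mem (i k : ℕ) (x : SC ends) : pr ends i k x ∈ hasDW ends i k := by
  refine supp_map ends (fun _ => True) x (by simp) _ _ ?_
  intro m f _
  rw [pr_single]
  split_ifs with h
  · exact single_mem_hasDW ends h.1 h.2 1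
  · exact Submodule.zero_mem _

lemma pr_of_mem (i k : ℕ) (x : SC ends) (hx : x ∈ hasDW ends i k) : pr ends i k x = x := by
  refine supp_eq ends _ x hx (pr ends i k) LinearMap.id ?_
  intro m f h
  rw [pr_single, if_pos h]; rfl

lemma pr_of_mem_ne (i k i' k' : ℕ) (x : SC ends) (hx : x ∈ hasDW ends i' k')
    (h : ¬ (i' = i ∧ k' = k)) : pr ends i k x = 0 := by
  refine supp_eq ends _ x hx (pr ends i k) 0 ?_
  rintro m f ⟨h1, h2⟩
  rw [pr_single, if_neg]; · rfl
  rw [h1, h2]; exact h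

lemma pr_D' (v : V) (i k : ℕ) (x : SC ends) :
    pr ends i k (D' ends v x) = D' ends v (pr ends (i + 1) k x) := by
  suffices pr ends i k * D' ends v = D' ends v * pr ends (i + 1) k from
    LinearMap.congr_fun this x
  apply ext_bas
  intro m f
  simp only [Module.End.mul_apply, pr_single]
  split_ifs with h
  · exact pr_of_mem ends _ _ _ (D'_mem ends v m f i k h.1 h.2)
  · rw [map_zero]
    rcases hd : degB ends (m, f) with _ | j
    · rw [D'_zero ends v m f hd, map_zero]
    · refine pr_of_mem_ne ends _ _ _ _ _ (D'_mem ends v m f j _ hd rfl) ?_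
      rintro ⟨rfl, h'⟩
      exact h ⟨hd, h'⟩

lemma pr_st_succ (e : E) (i k : ℕ) (x : SC ends) :
    pr ends i (k + 1) (st ends e x) = st ends e (pr ends i k x) := by
  suffices pr ends i (k + 1) * st ends e = st ends e * pr ends i k from
    LinearMap.congr_fun this x
  apply ext_bas
  intro m f
  simp only [Module.End.mul_apply, pr_single, st_single, wtB_add, add_left_inj]
  have : degB ends (m + Finsupp.single e 1, f) = degB ends (m, f) := rfl
  rw [this]
  split_ifs <;> simp [st_single]

lemma pr_st_zero (e : E) (i : ℕ) (x : SC ends) :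
    pr ends i 0 (st ends e x) = 0 := by
  suffices pr ends i 0 * st ends e = 0 from
    LinearMap.congr_fun this x
  apply ext_bas
  intro m f
  simp [Module.End.mul_apply, pr_single, st_single, wtB_add]

lemma st_mem (e : E) (i k : ℕ) (x : SC ends) (hx : x ∈ hasDW ends i k) :
    st ends e x ∈ hasDW ends i (k + 1) := by
  rw [← pr_of_mem ends i k x hx, ← pr_st_succ]
  exact pr_mem ends _ _ _

/-! The vertex shift operators -/

section shift
variable (c : E → ℤ) (d : V → ℤ)

/-- `v ↦ v + d v ∅` -/
noncomputable def Q (w : V) : Module.End ℤ (SC ends) :=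
  1 + d w • Subst ends w (Sum.inr true) (Sum.inr false) (fun _ => 1)

/-- The shifted differential -/
noncomputable def Dv1 (w : V) : Module.End ℤ (SC ends) :=
  Dv ends w + d w • ∑ h : {h : E × Bool // vtx ends h = w},
    Odd' ends w (Sum.inl h) (Sum.inr false)

lemma st_Q (e : E) (w : V) : Commute (st ends e) (Q ends d w) :=
  (Commute.one_right _).add_right ((st_Subst ends _ _ _ _ _).smul_right _)

lemma Q_odd (w w' : V) (hw : w ≠ w') (p q : VGen ends w') :
    Commute (Q ends d w) (Odd' ends w' p q) :=
  (Commute.one_left _).add_left ((odd_even ends w' w hw.symm p q (Sum.inr true) (Sum.inr false) rfl).smul_left _)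

lemma Q_Dv (w w' : V) (hw : w ≠ w') : Commute (Q ends d w) (Dv ends w') :=
  Commute.sum_right _ _ _ fun _ _ =>
    ((st_Q ends d _ _).symm.mul_right (Q_odd ends d w w' hw _ _)).sub_right
      (Q_odd ends d w w' hw _ _)

lemma Q_Dv1 (w w' : V) (hw : w ≠ w') : Commute (Q ends d w) (Dv1 ends d w') :=
  (Q_Dv ends d w w' hw).add_right
    ((Commute.sum_right _ _ _ fun _ _ => Q_odd ends d w w' hw _ _).smul_right _)

lemma Q_self (w : V) : Q ends d w * Dv1 ends d w = Dv ends w * Q ends d w := by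
  have h1 : Dv ends w * Subst ends w (Sum.inr true) (Sum.inr false) (fun _ => 1) = 0 := by
    unfold Dv
    rw [Finset.sum_mul]
    refine Finset.sum_eq_zero fun h _ => ?_
    rw [sub_mul, mul_assoc, Subst_mul_self _ _ _ _ _ _ _ _ (by simp),
      Subst_mul_self _ _ _ _ _ _ _ _ (by simp)]
    simp
  have h2 : ∀ h, Subst ends w (Sum.inr true) (Sum.inr false) (fun _ => 1) *
      Odd' ends w (Sum.inl h) (Sum.inr true) = Odd' ends w (Sum.inl h) (Sum.inr false) := by
    intro h
    apply ext_bas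
    intro m f
    simp only [Module.End.mul_apply, Subst_single]
    split_ifs <;> simp [Subst_single, -Finsupp.smul_single]
  have h3 : Subst ends w (Sum.inr true) (Sum.inr false) (fun _ => 1) * Dv ends w =
      - ∑ h : {h : E × Bool // vtx ends h = w}, Odd' ends w (Sum.inl h) (Sum.inr false) := by
    unfold Dv
    rw [Finset.mul_sum, ← Finset.sum_neg_distrib]
    refine Finset.sum_congr rfl fun h _ => ?_
    rw [mul_sub, h2, ← mul_assoc, ← (st_Subst ends _ _ _ _ _).eq, mul_assoc,
      Subst_mul_self _ _ _ _ _ _ _ _ (by simp)]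
    simp
  have h4 : Subst ends w (Sum.inr true) (Sum.inr false) (fun _ => 1) *
      ∑ h : {h : E × Bool // vtx ends h = w}, Odd' ends w (Sum.inl h) (Sum.inr false) = 0 := by
    rw [Finset.mul_sum]
    exact Finset.sum_eq_zero fun h _ => Subst_mul_self _ _ _ _ _ _ _ _ (by simp)
  unfold Q Dv1
  rw [add_mul, mul_add, mul_add, one_mul, one_mul, smul_mul_assoc, smul_mul_assoc, h3,
    mul_smul_comm, h4, mul_add, mul_one, mul_smul_comm, h1]
  simp

/-- Product of the shift operators over a list. -/
noncomputable def Ql (l : List V) : Module.End ℤ (SC ends) := (l.map (Q ends d)).prod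

lemma Ql_cons (a : V) (l : List V) : Ql ends d (a :: l) = Q ends d a * Ql ends d l := by
  simp [Ql]

lemma st_Ql (e : E) (l : List V) : Commute (st ends e) (Ql ends d l) := by
  apply Commute.list_prod_right
  intro x hx
  obtain ⟨a, _, rfl⟩ := List.mem_map.1 hx
  exact st_Q ends d e a

lemma Ql_Dv1_notMem (l : List V) (w : V) (hw : w ∉ l) :
    Commute (Ql ends d l) (Dv1 ends d w) := by
  apply Commute.list_prod_left
  intro x hx
  obtain ⟨a, ha, rfl⟩ := List.mem_map.1 hx
  exact Q_Dv1 ends d a w (by rintro rfl; exact hw ha)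

lemma Ql_Dv1 (l : List V) (hl : l.Nodup) (w : V) (hw : w ∈ l) :
    Ql ends d l * Dv1 ends d w = Dv ends w * Ql ends d l := by
  induction l with
  | nil => simp at hw
  | cons a l ih =>
    rw [List.nodup_cons] at hl
    rw [Ql_cons]
    by_cases h : a = w
    · subst h
      rw [mul_assoc, (Ql_Dv1_notMem ends d l a hl.1).eq, ← mul_assoc, Q_self, mul_assoc]
    · have hw' : w ∈ l := by
        rcases List.mem_cons.1 hw with h' | h'
        · exact absurd h'.symm h
        · exact h'
      rw [mul_assoc, ih hl.2 hw', ← mul_assoc, (Q_Dv ends d a w h).eq, mul_assoc]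

/-! The edge shift operator -/

/-- inclusion of polynomials -/
noncomputable def io (f : States ends) : MvPolynomial E ℤ →ₗ[ℤ] SC ends :=
  (MvPolynomial.basisMonomials E ℤ).constr ℤ fun m => Finsupp.single (m, f) 1

lemma io_monomial (f : States ends) (m : E →₀ ℕ) :
    io ends f (MvPolynomial.monomial m 1) = Finsupp.single (m, f) 1 := by
  have := (MvPolynomial.basisMonomials E ℤ).constr_basis ℤ
    (fun m => (Finsupp.single (m, f) 1 : SC ends)) m
  rw [MvPolynomial.coe_basisMonomials] at this
  exact this

lemma poly_ext {M : Type*} [AddCommGroup M] {F G : MvPolynomial E ℤ →ₗ[ℤ] M}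
    (h : ∀ m, F (MvPolynomial.monomial m 1) = G (MvPolynomial.monomial m 1)) : F = G := by
  apply (MvPolynomial.basisMonomials E ℤ).ext
  intro m
  rw [MvPolynomial.coe_basisMonomials]
  exact h m

lemma io_mul_X (f : States ends) (e : E) (p : MvPolynomial E ℤ) :
    io ends f (p * MvPolynomial.X e) = st ends e (io ends f p) := by
  suffices (io ends f) ∘ₗ LinearMap.mulRight ℤ (MvPolynomial.X e) = st ends e ∘ₗ io ends f from
    LinearMap.congr_fun this p
  apply poly_ext
  intro m
  simp only [LinearMap.comp_apply, LinearMap.mulRight_apply, io_monomial, st_single]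
  rw [MvPolynomial.X, MvPolynomial.monomial_mul, one_mul, io_monomial]

lemma Subst_io (w : V) (p q : VGen ends w) (s : States ends → ℤ) (f : States ends)
    (r : MvPolynomial E ℤ) :
    Subst ends w p q s (io ends f r) =
      if f w = p then s f • io ends (Function.update f w q) r else 0 := by
  split_ifs with h
  · suffices Subst ends w p q s ∘ₗ io ends f = s f • io ends (Function.update f w q) from
      LinearMap.congr_fun this r
    apply poly_ext
    intro m
    simp [io_monomial, Subst_single, h, -Finsupp.smul_single]
  · suffices Subst ends w p q s ∘ₗ io ends f = 0 from
      LinearMap.congr_fun this r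
    apply poly_ext
    intro m
    simp [io_monomial, Subst_single, h]

/-- polynomial shift -/
noncomputable def tau : MvPolynomial E ℤ →ₐ[ℤ] MvPolynomial E ℤ :=
  MvPolynomial.aeval fun e => MvPolynomial.X e + MvPolynomial.C (c e)

/-- `e ↦ e + c e` -/
noncomputable def Pm : Module.End ℤ (SC ends) :=
  Finsupp.linearCombination ℤ fun b => io ends b.2 (tau c (MvPolynomial.monomial b.1 1))

lemma Pm_single (m : E →₀ ℕ) (f : States ends) :
    Pm ends c (Finsupp.single (m, f) 1) = io ends f (tau c (MvPolynomial.monomial m 1)) := by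
  simp [Pm]

lemma Pm_st (e : E) : Pm ends c * st ends e = (st ends e + c e • 1) * Pm ends c := by
  apply ext_bas
  intro m f
  simp only [Module.End.mul_apply, LinearMap.add_apply, LinearMap.smul_apply,
    Module.End.one_apply, st_single, Pm_single]
  have : (MvPolynomial.monomial (m + Finsupp.single e 1) (1 : ℤ))
      = MvPolynomial.monomial m 1 * MvPolynomial.X e := by
    rw [MvPolynomial.X, MvPolynomial.monomial_mul, one_mul]
  rw [this, map_mul]
  have h2 : tau c (MvPolynomial.X e) = MvPolynomial.X e + MvPolynomial.C (c e) := by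
    simp [tau]
  rw [h2, mul_add, map_add, io_mul_X, mul_comm _ (MvPolynomial.C _), ← MvPolynomial.smul_eq_C_mul,
    map_smul]

lemma Pm_Subst (w : V) (p q : VGen ends w) (s : States ends → ℤ) :
    Pm ends c * Subst ends w p q s = Subst ends w p q s * Pm ends c := by
  apply ext_bas
  intro m f
  simp only [Module.End.mul_apply, Pm_single, Subst_single, Subst_io]
  split_ifs <;> simp [Pm_single, -Finsupp.smul_single]

lemma Pm_Dv (w : V) (hcd : ∀ h : {h : E × Bool // vtx ends h = w}, c h.1.1 = d w) :
    Pm ends c * Dv ends w = Dv1 ends d w * Pm ends c := by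
  unfold Dv1 Dv
  rw [Finset.smul_sum, ← Finset.sum_add_distrib, Finset.mul_sum, Finset.sum_mul]
  refine Finset.sum_congr rfl fun h _ => ?_
  rw [mul_sub, ← mul_assoc, Pm_st, mul_assoc, Pm_Subst, Pm_Subst, hcd]
  simp only [add_mul, sub_mul, smul_mul_assoc, one_mul, mul_assoc]
  abel

/-- The total shift -/
noncomputable def Tm : Module.End ℤ (SC ends) := Ql ends d Finset.univ.toList * Pm ends c

lemma Tm_st (e : E) : Tm ends c d * st ends e = (st ends e + c e • 1) * Tm ends c d := by
  unfold Tm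
  rw [mul_assoc, Pm_st, ← mul_assoc, ← mul_assoc]
  congr 1
  rw [mul_add, add_mul, (st_Ql ends d e _).eq, mul_smul_comm, smul_mul_assoc, mul_one, one_mul]

lemma Tm_D' (v : V) (hcd : ∀ h : E × Bool, vtx ends h ≠ v → c h.1 = d (vtx ends h)) :
    Tm ends c d * D' ends v = D' ends v * Tm ends c d := by
  unfold D'
  rw [Finset.mul_sum, Finset.sum_mul]
  refine Finset.sum_congr rfl fun w hw => ?_
  have hw' := Finset.ne_of_mem_erase hw
  unfold Tm
  rw [mul_assoc, Pm_Dv ends c d w, ← mul_assoc,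
    Ql_Dv1 ends d _ (Finset.nodup_toList _) w (by simp), mul_assoc]
  rintro ⟨h, rfl⟩
  exact (hcd h hw')

/-! Unipotence -/

/-- Chains of weight `< k`. -/
noncomputable def Wlt (k : ℕ) : Submodule ℤ (SC ends) :=
  Finsupp.supported ℤ ℤ {b | wtB ends b < k}

lemma mem_Wlt {k : ℕ} {x : SC ends} : x ∈ Wlt ends k ↔ ∀ b ∈ x.support, wtB ends b < k := by
  rw [Wlt, Finsupp.mem_supported]; rfl

lemma Wlt_mono {k k' : ℕ} (h : k ≤ k') {x : SC ends} (hx : x ∈ Wlt ends k) : x ∈ Wlt ends k' := by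
  rw [mem_Wlt] at *
  intro b hb
  exact (hx b hb).trans_le h

lemma single_Wlt {k : ℕ} {b : Bas ends} (h : wtB ends b < k) (a : ℤ) :
    Finsupp.single b a ∈ Wlt ends k := Finsupp.single_mem_supported _ _ h

lemma st_Wlt (e : E) {k : ℕ} {x : SC ends} (hx : x ∈ Wlt ends k) :
    st ends e x ∈ Wlt ends (k + 1) := by
  refine supp_map ends _ x (mem_Wlt ends |>.1 hx) _ _ ?_
  intro m f h
  rw [st_single]
  apply single_Wlt
  rw [wtB_add]; omega

/-- Unipotent operators -/
def Unip (X : Module.End ℤ (SC ends)) : Prop :=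
  ∀ k, ∀ x ∈ Wlt ends (k + 1), X x - x ∈ Wlt ends k

lemma Unip.of_bas (X : Module.End ℤ (SC ends))
    (h : ∀ m f, X (Finsupp.single (m, f) 1) - Finsupp.single (m, f) 1 ∈ Wlt ends (wtB ends (m, f))) :
    Unip ends X := by
  intro k x hx
  refine supp_map ends _ x (mem_Wlt ends |>.1 hx) (X - 1) _ ?_
  intro m f hm
  exact Wlt_mono ends (by omega) (h m f)

lemma Unip.pres {X : Module.End ℤ (SC ends)} (hX : Unip ends X) {k : ℕ} {x : SC ends}
    (hx : x ∈ Wlt ends k) : X x ∈ Wlt ends k := by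
  have := Wlt_mono ends (Nat.le_refl k) (hX k x (Wlt_mono ends (Nat.le_succ k) hx))
  simpa using Submodule.add_mem _ this hx

lemma Unip.mul {X Y : Module.End ℤ (SC ends)} (hX : Unip ends X) (hY : Unip ends Y) :
    Unip ends (X * Y) := by
  intro k x hx
  have h1 := hX.pres ends (hY k x hx)
  have h2 := hX k x hx
  have := Submodule.add_mem _ h1 h2
  rw [map_sub] at this
  simpa using this

lemma Q_unip (w : V) : Unip ends (Q ends d w) := by
  apply Unip.of_bas
  intro m f
  simp only [Q, LinearMap.add_apply, Module.End.one_apply, LinearMap.smul_apply, Subst_single,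
    add_sub_cancel_left]
  refine Submodule.smul_mem _ _ ?_
  split_ifs with h
  · refine Submodule.smul_mem _ _ (single_Wlt ends ?_ _)
    have := wtB_update ends m f w (Sum.inr false)
    simp [h, wl] at this
    omega
  · exact Submodule.zero_mem _

lemma Ql_unip (l : List V) : Unip ends (Ql ends d l) := by
  induction l with
  | nil => intro k x _; simp [Ql]
  | cons a l ih => rw [Ql_cons]; exact (Q_unip ends d a).mul ends ih

lemma Pm_unip : Unip ends (Pm ends c) := by
  apply Unip.of_bas
  intro m f
  have step : ∀ (e : E) (m : E →₀ ℕ),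
      Pm ends c (Finsupp.single (m, f) 1) - Finsupp.single (m, f) 1
        ∈ Wlt ends (wtB ends (m, f)) →
      Pm ends c (Finsupp.single (m + Finsupp.single e 1, f) 1)
        - Finsupp.single (m + Finsupp.single e 1, f) 1
        ∈ Wlt ends (wtB ends (m + Finsupp.single e 1, f)) := by
    intro e m hm
    have h1 := LinearMap.congr_fun (Pm_st ends c e) (Finsupp.single (m, f) 1)
    simp only [Module.End.mul_apply, LinearMap.add_apply, LinearMap.smul_apply,
      Module.End.one_apply, st_single] at h1
    rw [h1, wtB_add, ← st_single, add_sub_right_comm, ← map_sub]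
    refine Submodule.add_mem _ (st_Wlt ends e hm) (Submodule.smul_mem _ _ ?_)
    have h2 := Submodule.add_mem _ (Wlt_mono ends (Nat.le_succ _) hm)
      (single_Wlt ends (Nat.lt_succ_self (wtB ends (m, f))) 1)
    simpa using h2
  have step' : ∀ (e : E) (n : ℕ) (m : E →₀ ℕ),
      Pm ends c (Finsupp.single (m, f) 1) - Finsupp.single (m, f) 1
        ∈ Wlt ends (wtB ends (m, f)) →
      Pm ends c (Finsupp.single (m + Finsupp.single e n, f) 1)
        - Finsupp.single (m + Finsupp.single e n, f) 1
        ∈ Wlt ends (wtB ends (m + Finsupp.single e n, f)) := by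
    intro e n
    induction n with
    | zero => intro m hm; simpa using hm
    | succ n ih =>
      intro m hm
      have := step e _ (ih m hm)
      rwa [add_assoc, ← Finsupp.single_add] at this
  induction m using Finsupp.induction₂ with
  | zero =>
    rw [Pm_single, show MvPolynomial.monomial (0 : E →₀ ℕ) (1 : ℤ) = 1 from rfl, map_one,
      show (1 : MvPolynomial E ℤ) = MvPolynomial.monomial 0 1 from rfl, io_monomial, sub_self]
    exact Submodule.zero_mem _
  | add_single a b g _ _ ih => exact step' a b g ih

lemma Tm_unip : Unip ends (Tm ends c d) := (Ql_unip ends d _).mul ends (Pm_unip ends c)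

end shift

/-- Injectivity of `e₁ - e₂` on homology away from `v`. -/
lemma inj_lemma (v : V) (c : E → ℤ) (d : V → ℤ)
    (hcd : ∀ h : E × Bool, vtx ends h ≠ v → c h.1 = d (vtx ends h))
    (e₁ e₂ : E) (h₁ : c e₁ = 1) (h₂ : c e₂ = 0) (i k : ℕ) (x w : SC ends)
    (hx : x ∈ hasDW ends i k) (hw : st ends e₁ x - st ends e₂ x = D' ends v w) :
    ∃ z ∈ hasDW ends (i + 1) k, x = D' ends v z := by
  set u := Tm ends c d x with hu
  have hT : ∀ e y, Tm ends c d (st ends e y) = st ends e (Tm ends c d y) + c e • Tm ends c d y :=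
    fun e y => by
      have := LinearMap.congr_fun (Tm_st ends c d e) y
      simpa using this
  have hTD : ∀ y, Tm ends c d (D' ends v y) = D' ends v (Tm ends c d y) :=
    fun y => LinearMap.congr_fun (Tm_D' ends c d v hcd) y
  have key : u = D' ends v (Tm ends c d w) - (st ends e₁ u - st ends e₂ u) := by
    rw [← hTD, ← hw, map_sub, hT, hT, h₁, h₂, ← hu]
    simp
  have claim : ∀ j, ∃ z ∈ hasDW ends (i + 1) j, pr ends i j u = D' ends v z := by
    intro j
    induction j with
    | zero =>
      refine ⟨_, pr_mem ends (i + 1) 0 (Tm ends c d w), ?_⟩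
      rw [key, map_sub, map_sub, pr_st_zero, pr_st_zero, pr_D']
      simp
    | succ j ih =>
      obtain ⟨z, hz, hz'⟩ := ih
      refine ⟨pr ends (i + 1) (j + 1) (Tm ends c d w) - (st ends e₁ z - st ends e₂ z),
        Submodule.sub_mem _ (pr_mem ends _ _ _)
          (Submodule.sub_mem _ (st_mem ends _ _ _ _ hz) (st_mem ends _ _ _ _ hz)), ?_⟩
      have hc : ∀ e y, D' ends v (st ends e y) = st ends e (D' ends v y) :=
        fun e y => (LinearMap.congr_fun (st_D' ends v e).eq y).symm
      conv_lhs => rw [key]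
      rw [map_sub, map_sub, pr_st_succ, pr_st_succ, pr_D', hz', map_sub, map_sub, hc, hc]
  obtain ⟨z, hz, hz'⟩ := claim k
  refine ⟨z, hz, ?_⟩
  rw [← hz']
  have hx' : x ∈ Wlt ends (k + 1) := by
    rw [mem_Wlt]
    intro b hb
    have := (hx b hb).2
    omega
  have h3 := Tm_unip ends c d k x hx'
  have h4 : pr ends i k (u - x) = 0 := by
    refine supp_eq ends _ _ (mem_Wlt ends |>.1 h3) (pr ends i k) 0 ?_
    intro m f hm
    rw [pr_single, if_neg]; · rfl
    omega
  rw [map_sub, pr_of_mem ends i k x hx, sub_eq_zero] at h4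
  exact h4.symm

end Proof2
end Swiatkowski
set_option linter.unusedSectionVars false
set_option linter.unusedSimpArgs false
namespace Swiatkowski
section Proof3

variable {V E : Type} [Fintype V] [Fintype E] [DecidableEq V] [DecidableEq E]
variable (ends : E → V × V) (v : V)

/-- Projection to chains with a half-edge at `v`. -/
noncomputable def piH : Module.End ℤ (SC ends) :=
  Finsupp.linearCombination ℤ fun b =>
    if (b.2 v).isLeft = true then Finsupp.single b 1 else 0

lemma piH_single (m : E →₀ ℕ) (f : States ends) :
    piH ends v (Finsupp.single (m, f) 1) =
    if (f v).isLeft = true then Finsupp.single (m, f) 1 else 0 := by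
  simp [piH]

lemma piH_st (e : E) : Commute (piH ends v) (st ends e) := by
  apply ext_bas
  intro m f
  simp only [Module.End.mul_apply, st_single, piH_single]
  split_ifs <;> simp [st_single]

lemma piH_Subst (w : V) (hw : w ≠ v) (p q : VGen ends w) (s : States ends → ℤ) :
    Commute (piH ends v) (Subst ends w p q s) := by
  apply ext_bas
  intro m f
  simp only [Module.End.mul_apply, Subst_single, piH_single]
  by_cases h : f w = p <;> by_cases h' : (f v).isLeft = true <;>
    simp [h, h', Subst_single, piH_single, Function.update_of_ne hw.symm, -Finsupp.smul_single]

lemma piH_D' : Commute (piH ends v) (D' ends v) := by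
  refine Commute.sum_right _ _ _ fun w hw => ?_
  have hw' := Finset.ne_of_mem_erase hw
  exact Commute.sum_right _ _ _ fun h _ =>
    ((piH_st ends v _).mul_right (piH_Subst ends v w hw' _ _ _)).sub_right
      (piH_Subst ends v w hw' _ _ _)

lemma piH_Dv : piH ends v * Dv ends v = 0 := by
  apply ext_bas
  intro m f
  rw [Module.End.mul_apply]
  rcases hf : f v with h | t
  · rw [Dv_single_left ends v m f h hf, map_smul, map_sub, piH_single, piH_single]
    simp
  · rw [Dv_single_right ends v m f t hf, map_zero]; rfl

lemma Dv_piH : Dv ends v * piH ends v = Dv ends v := by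
  apply ext_bas
  intro m f
  rw [Module.End.mul_apply, piH_single]
  rcases hf : f v with h | t
  · simp
  · rw [Dv_single_right ends v m f t hf]; simp

lemma piH_mem (i k : ℕ) (x : SC ends) (hx : x ∈ hasDW ends i k) :
    piH ends v x ∈ hasDW ends i k := by
  refine supp_map ends _ x hx _ _ ?_
  intro m f h
  rw [piH_single]
  split_ifs
  · exact single_mem_hasDW ends h.1 h.2 1
  · exact Submodule.zero_mem _

lemma K_D' (h₀ : {h : E × Bool // vtx ends h = v}) :
    Odd' ends v (Sum.inr true) (Sum.inl h₀) * D' ends v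
      = - (D' ends v * Odd' ends v (Sum.inr true) (Sum.inl h₀)) := by
  unfold D'
  rw [Finset.mul_sum, Finset.sum_mul, ← Finset.sum_neg_distrib]
  refine Finset.sum_congr rfl fun w hw => ?_
  exact odd_Dv ends v w (Finset.ne_of_mem_erase hw).symm _ _ (by simp)

lemma sgn_sq (f : States ends) (w : V) : sgn ends f w * sgn ends f w = 1 := by
  unfold sgn
  rw [← mul_pow]; simp

lemma Dv_K (h₀ : {h : E × Bool // vtx ends h = v}) :
    Dv ends v * Odd' ends v (Sum.inr true) (Sum.inl h₀) =
      st ends h₀.1.1 * Subst ends v (Sum.inr true) (Sum.inr false) (fun _ => 1)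
      - Subst ends v (Sum.inr true) (Sum.inr true) (fun _ => 1) := by
  apply ext_bas
  intro m f
  simp only [Module.End.mul_apply, LinearMap.sub_apply, Subst_single]
  split_ifs with h
  · rw [map_smul, Dv_single_left ends v m _ h₀ (by simp), smul_smul,
      sgn_update_ge ends f v _ v (lt_irrefl _), sgn_sq]
    simp [st_single]
  · simp

lemma K_mem (h₀ : {h : E × Bool // vtx ends h = v}) (i k : ℕ) (x : SC ends)
    (hx : x ∈ hasDW ends i k) :
    Odd' ends v (Sum.inr true) (Sum.inl h₀) x ∈ hasDW ends (i + 1) k := by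
  refine supp_map ends _ x hx _ _ ?_
  intro m f h
  rw [Subst_single]
  split_ifs with hf
  · refine Submodule.smul_mem _ _ (single_mem_hasDW ends ?_ ?_ _)
    · have := degB_update ends m m f v (Sum.inl h₀)
      simp [hf] at this
      omega
    · have := wtB_update ends m f v (Sum.inl h₀)
      simp [hf, wl] at this
      omega
  · exact Submodule.zero_mem _

/-- chains with `∅` at `v` -/
noncomputable def Emp : Submodule ℤ (SC ends) :=
  Finsupp.supported ℤ ℤ {b | b.2 v = Sum.inr false}

lemma mem_Emp {x : SC ends} : x ∈ Emp ends v ↔ ∀ b ∈ x.support, b.2 v = Sum.inr false := by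
  rw [Emp, Finsupp.mem_supported]; rfl

lemma single_Emp {b : Bas ends} (h : b.2 v = Sum.inr false) (a : ℤ) :
    Finsupp.single b a ∈ Emp ends v := Finsupp.single_mem_supported _ _ h

lemma Emp_aux1 (x : SC ends) :
    x - Subst ends v (Sum.inr true) (Sum.inr true) (fun _ => 1) x - piH ends v x ∈ Emp ends v := by
  refine supp_map ends (fun _ => True) x (by simp)
    (1 - Subst ends v (Sum.inr true) (Sum.inr true) (fun _ => 1) - piH ends v) _ ?_
  intro m f _
  simp only [LinearMap.sub_apply, Module.End.one_apply, Subst_single, piH_single]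
  rcases hf : f v with h | t
  · simp
  · cases t
    · simp only [reduceCtorEq, Sum.inr.injEq, if_false, sub_zero, Bool.false_eq_true, Sum.isLeft_inr]
      exact single_Emp ends v hf _
    · have : Function.update f v (Sum.inr true) = f := by
        rw [← hf, Function.update_eq_self]
      simp [this]

lemma Emp_aux2 (e : E) (x : SC ends) :
    st ends e (Subst ends v (Sum.inr true) (Sum.inr false) (fun _ => 1) x) ∈ Emp ends v := by
  refine supp_map ends (fun _ => True) x (by simp)
    (st ends e * Subst ends v (Sum.inr true) (Sum.inr false) (fun _ => 1)) _ ?_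
  intro m f _
  simp only [Module.End.mul_apply, Subst_single]
  split_ifs
  · rw [map_smul, st_single]
    exact Submodule.smul_mem _ _ (single_Emp ends v (by simp) _)
  · simp

/-! Passing to the explosion -/

lemma sgn_deg1 (m : E →₀ ℕ) (f : States ends) (w : V) (h : degB ends (m, f) = 1)
    (hw : (f w).isLeft = true) : sgn ends f w = 1 := by
  unfold sgn
  rw [Finset.filter_false_of_mem]; · simp
  rintro u - ⟨h1, h2⟩
  unfold degB at h
  rw [Finset.card_eq_one] at h
  obtain ⟨a, ha⟩ := h
  have h3 : u ∈ ({a} : Finset V) := by rw [← ha]; simp [h2]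
  have h4 : w ∈ ({a} : Finset V) := by rw [← ha]; simp [hw]
  rw [Finset.mem_singleton] at h3 h4
  subst h3; subst h4
  exact lt_irrefl _ h1

lemma vtx_ex (h : E × Bool) (w : V) (hw : w ≠ v) (hh : vtx ends h = w) :
    vtx (exEnds ends v) h = Sum.inl ⟨w, hw⟩ := by
  subst hh
  rcases h with ⟨e, b⟩
  cases b <;> simp only [vtx, exEnds, cond] <;> exact dif_neg hw

lemma down_inl (f : States ends) (w : V) (hw : w ≠ v) (h) (hf : f w = Sum.inl h) :
    downState ends v f (Sum.inl ⟨w, hw⟩) = Sum.inl ⟨h.1, vtx_ex ends v h.1 w hw h.2⟩ := by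
  simp only [downState, hf]
  exact dif_pos (vtx_ex ends v h.1 w hw h.2)

lemma down_inr (f : States ends) (w : V) (hw : w ≠ v) (t) (hf : f w = Sum.inr t) :
    downState ends v f (Sum.inl ⟨w, hw⟩) = Sum.inr t := by
  simp only [downState, hf]

lemma down_leaf (f : States ends) (h) : downState ends v f (Sum.inr h) = Sum.inr false := rfl

lemma down_update (f : States ends) (w : V) (hw : w ≠ v) (t : Bool) :
    downState ends v (Function.update f w (Sum.inr t))
      = Function.update (downState ends v f) (Sum.inl ⟨w, hw⟩) (Sum.inr t) := by
  funext u
  rcases u with ⟨u, hu⟩ | u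
  · by_cases h : u = w
    · subst h
      rw [Function.update_self, down_inr ends v _ u hu t (by simp)]
    · rw [Function.update_of_ne (by simpa using h)]
      rcases hf : f u with a | a
      · rw [down_inl ends v f u hu a hf,
          down_inl ends v _ u hu a (by rw [Function.update_of_ne h, hf])]
      · rw [down_inr ends v f u hu a hf,
          down_inr ends v _ u hu a (by rw [Function.update_of_ne h, hf])]
  · rw [Function.update_of_ne (by simp)]; rfl

lemma sum_ex {M : Type*} [AddCommMonoid M] (G : ExVert ends v → M) (F : V → M)
    (h1 : ∀ w (hw : w ≠ v), G (Sum.inl ⟨w, hw⟩) = F w) (h2 : ∀ h, G (Sum.inr h) = 0)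
    (h3 : F v = 0) : ∑ u, G u = ∑ w, F w := by
  rw [Fintype.sum_sum_type, Finset.sum_eq_zero (s := Finset.univ) (f := fun h => G (Sum.inr h))
    (fun h _ => h2 h), add_zero, ← Finset.add_sum_erase _ _ (Finset.mem_univ v), h3, zero_add,
    Finset.sum_subtype (p := fun w => w ≠ v) (Finset.univ.erase v) (by simp)]
  exact Finset.sum_congr rfl fun w _ => h1 w.1 w.2

lemma degB_down (m : E →₀ ℕ) (f : States ends) (hf : f v = Sum.inr false) :
    degB (exEnds ends v) (m, downState ends v f) = degB ends (m, f) := by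
  unfold degB
  rw [Finset.card_filter, Finset.card_filter]
  apply sum_ex ends v
  · intro w hw
    rcases h : f w with a | a
    · simp [down_inl ends v f w hw a h, h]
    · simp [down_inr ends v f w hw a h, h]
  · intro h; simp [down_leaf]
  · simp [hf]

lemma wtB_down (m : E →₀ ℕ) (f : States ends) (hf : f v = Sum.inr false) :
    wtB (exEnds ends v) (m, downState ends v f) = wtB ends (m, f) := by
  unfold wtB
  congr 1
  apply sum_ex ends v
  · intro w hw
    rcases h : f w with a | a
    · simp [down_inl ends v f w hw a h, h]
    · simp [down_inr ends v f w hw a h, h]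
  · intro h; simp [down_leaf]
  · simp [hf]

/-- Transfer of chains to the explosion. -/
noncomputable def dn : SC ends →ₗ[ℤ] SC (exEnds ends v) :=
  Finsupp.linearCombination ℤ fun b => Finsupp.single (b.1, downState ends v b.2) 1

lemma dn_single (m : E →₀ ℕ) (f : States ends) :
    dn ends v (Finsupp.single (m, f) 1) = Finsupp.single (m, downState ends v f) 1 := by
  simp [dn]

lemma D_dn (m : E →₀ ℕ) (f : States ends) (hf : f v = Sum.inr false)
    (hd : degB ends (m, f) = 1) :
    D (exEnds ends v) (dn ends v (Finsupp.single (m, f) 1))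
      = dn ends v (D ends (Finsupp.single (m, f) 1)) := by
  rw [D_eq, D_eq, dn_single, LinearMap.sum_apply, LinearMap.sum_apply, map_sum]
  apply sum_ex ends v
  · intro w hw
    rcases h : f w with a | a
    · have h' := down_inl ends v f w hw a h
      rw [Dv_single_left ends w m f a h, Dv_single_left (exEnds ends v) _ m _ _ h',
        sgn_deg1 ends m f w hd (by simp [h]),
        sgn_deg1 (exEnds ends v) m _ _ ((degB_down ends v m f hf).trans hd) (by simp [h']),
        one_smul, one_smul, map_sub, dn_single, dn_single, down_update ends v f w hw,
        down_update ends v f w hw]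
    · rw [Dv_single_right ends w m f a h,
        Dv_single_right (exEnds ends v) _ m _ a (down_inr ends v f w hw a h), map_zero]
  · intro h
    exact Dv_single_right (exEnds ends v) _ m _ false rfl
  · rw [Dv_single_right ends v m f _ hf, map_zero]

lemma incl_dn (m : E →₀ ℕ) (f : States ends) (hf : f v = Sum.inr false) :
    incl ends v (dn ends v (Finsupp.single (m, f) 1)) = Finsupp.single (m, f) 1 := by
  rw [dn_single]
  have h1 : ¬ leafHasHalf ends v (downState ends v f) := by
    rintro ⟨h, hh⟩
    simp [down_leaf] at hh
  have h2 : extraMon ends v (downState ends v f) = 0 := by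
    unfold extraMon
    exact Finset.sum_eq_zero fun h _ => rfl
  have h3 : resState ends v (downState ends v f) = f := by
    funext w
    unfold resState
    by_cases q : w = v
    · subst q; simp [hf]
    · rw [dif_neg q]
      rcases h : f w with a | a
      · rw [down_inl ends v f w q a h]
        simp [a.2]
      · rw [down_inr ends v f w q a h]
  simp [incl, inclB, h1, h2, h3]

lemma lift_lemma (k : ℕ) (x : SC ends) (hx : x ∈ hasDW ends 1 k) (hD : D ends x = 0)
    (hE : x ∈ Emp ends v) : ∃ y ∈ cyc (exEnds ends v) 1 k, x = incl ends v y := by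
  have hP : ∀ b ∈ x.support, b.2 v = Sum.inr false ∧ degB ends b = 1 ∧ wtB ends b = k :=
    fun b hb => ⟨(mem_Emp ends v).1 hE b hb, hx b hb⟩
  refine ⟨dn ends v x, ⟨?_, ?_⟩, ?_⟩
  · rw [SetLike.mem_coe, LinearMap.mem_ker]
    have := supp_eq ends _ x hP (D (exEnds ends v) ∘ₗ dn ends v) (dn ends v ∘ₗ D ends)
      (fun m f h => D_dn ends v m f h.1 h.2.1)
    simpa [hD] using this
  · refine supp_map ends _ x hP (dn ends v) _ ?_
    rintro m f ⟨h1, h2, h3⟩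
    rw [dn_single]
    exact single_mem_hasDW _ ((degB_down ends v m f h1).trans h2)
      ((wtB_down ends v m f h1).trans h3) 1
  · exact (supp_eq ends _ x hP (incl ends v ∘ₗ dn ends v) LinearMap.id
      (fun m f h => incl_dn ends v m f h.1)).symm

lemma main_lemma (c : E → ℤ) (d : V → ℤ)
    (hcd : ∀ h : E × Bool, vtx ends h ≠ v → c h.1 = d (vtx ends h))
    (e₁ e₂ : E) (h₁ : c e₁ = 1) (h₂ : c e₂ = 0) (k : ℕ) (x w : SC ends)
    (hx : x ∈ hasDW ends 1 k) (hD : D ends x = 0)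
    (hw : st ends e₁ x - st ends e₂ x = D ends w) :
    ∃ y ∈ cyc (exEnds ends v) 1 k, ∃ z ∈ hasDW ends 2 k,
        x = incl ends v y + D ends z := by
  have hDs : ∀ y, D ends y = Dv ends v y + D' ends v y := fun y => by rw [D_eq' ends v]; rfl
  have cD : ∀ y, piH ends v (D' ends v y) = D' ends v (piH ends v y) :=
    fun y => LinearMap.congr_fun (piH_D' ends v).eq y
  have cS : ∀ e y, piH ends v (st ends e y) = st ends e (piH ends v y) :=
    fun e y => LinearMap.congr_fun (piH_st ends v e).eq y
  have zD : ∀ y, piH ends v (Dv ends v y) = 0 := fun y => LinearMap.congr_fun (piH_Dv ends v) y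
  by_cases hne : Nonempty {h : E × Bool // vtx ends h = v}
  · obtain ⟨h₀⟩ := hne
    have e1 : st ends e₁ (piH ends v x) - st ends e₂ (piH ends v x)
        = D' ends v (piH ends v w) := by
      rw [← cS, ← cS, ← map_sub, hw, hDs, map_add, zD, zero_add, cD]
    obtain ⟨g, hg, hg'⟩ := inj_lemma ends v c d hcd e₁ e₂ h₁ h₂ 1 k _ _
      (piH_mem ends v 1 k x hx) e1
    set x1 := x - D ends g with hx1
    have pp : ∀ y, piH ends v (piH ends v y) = piH ends v y := by
      intro y
      refine LinearMap.congr_fun (f := piH ends v * piH ends v) (ext_bas ends ?_) y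
      intro m f
      rw [Module.End.mul_apply, piH_single]
      split_ifs with h
      · rw [piH_single, if_pos h]
      · simp
    have p1 : piH ends v x1 = 0 := by
      rw [hx1, map_sub, hDs, map_add, zD, zero_add, ← hg', pp, sub_self]
    have d1 : D ends x1 = 0 := by rw [hx1, map_sub, D_D, hD, sub_zero]
    have dv1 : Dv ends v x1 = 0 := by
      have := LinearMap.congr_fun (Dv_piH ends v) x1
      rw [Module.End.mul_apply, p1, map_zero] at this
      exact this.symm
    have d'1 : D' ends v x1 = 0 := by
      have := hDs x1
      rw [d1, dv1, zero_add] at this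
      exact this.symm
    have m1 : x1 ∈ hasDW ends 1 k := Submodule.sub_mem _ hx (D_mem ends 1 k g hg)
    set K := Odd' ends v (Sum.inr true) (Sum.inl h₀) with hK
    have mK : K x1 ∈ hasDW ends 2 k := K_mem ends v h₀ 1 k x1 m1
    have DK : D ends (K x1) =
        st ends h₀.1.1 (Subst ends v (Sum.inr true) (Sum.inr false) (fun _ => 1) x1)
        - Subst ends v (Sum.inr true) (Sum.inr true) (fun _ => 1) x1 := by
      have a1 := LinearMap.congr_fun (K_D' ends v h₀) x1
      have a2 := LinearMap.congr_fun (Dv_K ends v h₀) x1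
      simp only [Module.End.mul_apply, LinearMap.neg_apply, LinearMap.sub_apply, d'1,
        map_zero] at a1 a2
      rw [hDs, a2, neg_eq_zero.1 a1.symm, add_zero]
    have hE : x1 + D ends (K x1) ∈ Emp ends v := by
      have b1 := Emp_aux1 ends v x1
      have b2 := Emp_aux2 ends v h₀.1.1 x1
      rw [p1, sub_zero] at b1
      have := Submodule.add_mem _ b1 b2
      rw [DK]
      convert this using 1
      abel
    obtain ⟨y, hy, hy'⟩ := lift_lemma ends v k (x1 + D ends (K x1))
      (Submodule.add_mem _ m1 (D_mem ends 1 k _ mK))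
      (by rw [map_add, d1, D_D, add_zero]) hE
    refine ⟨y, hy, g - K x1, Submodule.sub_mem _ hg mK, ?_⟩
    have hxx : x = x1 + D ends g := by rw [hx1]; abel
    rw [← hy', map_sub (D ends) g (K x1)]
    conv_lhs => rw [hxx]
    abel
  · have z0 : ∀ y, D ends y = D' ends v y := by
      intro y
      have : Dv ends v = 0 := by
        unfold Dv
        exact Finset.sum_eq_zero fun h _ => absurd ⟨h⟩ hne
      rw [hDs, this]; simp
    rw [z0] at hw
    obtain ⟨z, hz, hz'⟩ := inj_lemma ends v c d hcd e₁ e₂ h₁ h₂ 1 k x w hx hw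
    refine ⟨0, Submodule.zero_mem _, z, hz, ?_⟩
    rw [map_zero, zero_add, z0, hz']

end Proof3
end Swiatkowski

open Swiatkowski

theorem torsion_in_image_of_explosion
    {V E : Type} [Fintype V] [Fintype E] [DecidableEq V] [DecidableEq E]
    (ends : E → V × V) (v : V) (e₁ e₂ : E)
    (hsep : ¬ Relation.ReflTransGen
      (fun a b : ExVert ends v => ∃ e : E,
        exEnds ends v e = (a, b) ∨ exEnds ends v e = (b, a))
      (exEnds ends v e₁).1 (exEnds ends v e₂).1) :
    ∀ k : ℕ, ∀ x ∈ cyc ends 1 k,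
      (stab ends e₁ - stab ends e₂) x ∈ bdry ends 1 (k + 1) →
      ∃ y ∈ cyc (exEnds ends v) 1 k, ∃ z ∈ hasDW ends 2 k,
        x = incl ends v y + D ends z := by
  classical
  intro k x hx hb
  obtain ⟨w, -, hw⟩ := hb
  set r := (fun a b : ExVert ends v => ∃ e : E,
        exEnds ends v e = (a, b) ∨ exEnds ends v e = (b, a)) with hr
  set a := (exEnds ends v e₁).1 with ha
  refine main_lemma ends v
    (fun e => if Relation.ReflTransGen r a (exEnds ends v e).1 then 1 else 0)
    (fun u => if hu : u ≠ v then (if Relation.ReflTransGen r a (Sum.inl ⟨u, hu⟩) then 1 else 0)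
      else 0) ?_ e₁ e₂ (if_pos Relation.ReflTransGen.refl) (if_neg hsep) k x w hx.2 hx.1 hw.symm
  intro h hh
  have key : Relation.ReflTransGen r a (exEnds ends v h.1).1 ↔
      Relation.ReflTransGen r a (Sum.inl ⟨vtx ends h, hh⟩) := by
    rw [← vtx_ex ends v h _ hh rfl]
    rcases h with ⟨e, b⟩
    cases b
    · rfl
    · exact ⟨fun H => H.tail ⟨e, Or.inl rfl⟩, fun H => H.tail ⟨e, Or.inr rfl⟩⟩
  simp only [dif_pos hh, key]
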